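/- Let s ≠ 0 and c ≠ 0 be real and define ν(x) = c·x^(s−1) for x > 0. Let η > 0 and ū > 0, set Ē = √2·ū/η, let ν̄ = ν(Ē), ν̄' = ν'(Ē), ν̄'' = ν''(Ē) (first and second derivatives of ν at Ē), and R = 1/(ν̄ + Ē·ν̄'). Then for all real numbers a, b, Re, g₁, g₂ (where a and b stand for ∂ū/∂x and ∂η/∂x), the right-hand side of the general momentum model evaluated at γ = 1, namely −[5/2 + (5/48)·Ē·ν̄·R²·(2ν̄' + Ē·ν̄'')]·ν̄·ū/η² − Re·[7/4 − 13/48 + (1/96)·Ē·R²·(38·ν̄·ν̄' + 12·Ē·(ν̄')² + 13·Ē·ν̄·ν̄'')]·ū·a − Re·√2·[1/8 − 1/16 + (13/192)·Ē²·R²·(2·(ν̄')² − ν̄·ν̄'')]·Ē·ū·b + [3/4 + 1/12 − (1/24)·Ē·ν̄·R²·(2ν̄' + Ē·ν̄'')]·(g₁ − g₂·b), equals the right-hand side of the power-law momentum model, namely −(5·(25 − 1/s)·c/(48·√2·η))·(√2·ū/η)^s − Re·((167 − 25/s)/96)·ū·a − Re·((25 − 13/s)/96)·(ū²/η)·b +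 ((19 + 1/s)/24)·(g₁ − g₂·b). Hence the power-law model (gup0) is exactly the specialization of the general non-Newtonian model (gu) at γ = 1 to the viscosity ν(x) = c·x^(s−1). -/

import Mathlib

/-!
Put `E = √2 ū/η > 0`. A power law `ν(x) = c x^(s-1)` satisfies the Euler relations
`E ν' = (s-1) ν` and `E² ν'' = (s-1)(s-2) ν` at `E`, hence `R = 1/(s ν)`. Each bracket of the
general model contains `R²` times an expression quadratic in `ν, E ν', E² ν''`; in each of them
the relations produce a multiple of `(s-1) s ν²`, so that the bracket is affine in
`(s-1)/s = 1 - 1/s`. What remains is `E^(s-1) = E^s / E` in the drag term and `√2 E ū = 2 ū²/η`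
in the depth-gradient term.
-/

theorem deriv_powerLaw (c p : ℝ) {x : ℝ} (hx : 0 < x) :
    deriv (fun y : ℝ => c * y ^ p) x = c * p * x ^ (p - 1) := by
  rw [((Real.hasDerivAt_rpow_const (p := p) (Or.inl hx.ne')).const_mul c).deriv, mul_assoc]

/-- The Euler relation `E ν' = (s-1) ν`, solved for `ν'`. -/
theorem deriv_viscosity (c s : ℝ) {x : ℝ} (hx : 0 < x) :
    deriv (fun y : ℝ => c * y ^ (s - 1)) x = (s - 1) * (c * x ^ (s - 1)) / x := by
  rw [deriv_powerLaw c _ hx, Real.rpow_sub_one hx.ne' (s - 1)]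
  ring

/-- The Euler relation `E² ν'' = (s-1)(s-2) ν`, solved for `ν''`. -/
theorem deriv_deriv_viscosity (c s : ℝ) {x : ℝ} (hx : 0 < x) :
    deriv (deriv (fun y : ℝ => c * y ^ (s - 1))) x
      = (s - 1) * (s - 2) * (c * x ^ (s - 1)) / x ^ 2 := by
  -- The formula for the first derivative is available on the half-line only, which is a
  -- neighbourhood of `x`.
  have h : deriv (fun y : ℝ => c * y ^ (s - 1))
      =ᶠ[nhds x] fun y : ℝ => (c * (s - 1)) * y ^ (s - 1 - 1) := by
    filter_upwards [lt_mem_nhds hx] with y hy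
    exact deriv_powerLaw c _ hy
  rw [h.deriv_eq, deriv_powerLaw _ _ hx, Real.rpow_sub_one hx.ne' (s - 1 - 1),
    Real.rpow_sub_one hx.ne' (s - 1)]
  field_simp
  ring


/-- For the power-law viscosity `ν(x) = c x^(s−1)` (`s ≠ 0`, `c ≠ 0`),
depth `η > 0`, mean velocity `ū > 0`, mean shear-rate `Eb = √2 ū/η`, with
`νb = ν(Eb)`, `νb' = ν'(Eb)`, `νb'' = ν''(Eb)` and `R = 1/(νb + Eb νb')`, the right-hand
side of the general momentum model (gu) evaluated at `γ = 1` equals the right-hand side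
of the power-law momentum model (gup0), for all values of `∂ū/∂x = a`, `∂η/∂x = b`,
`Re`, `g₁` and `g₂`.  Hence the power-law model is exactly the specialization of the
general non-Newtonian model at `γ = 1` to `ν(x) = c x^(s−1)`. -/
theorem general_model_specializes_to_power_law
    (s c η ubar : ℝ) (hs : s ≠ 0) (hc : c ≠ 0) (hη : 0 < η) (hu : 0 < ubar) :
    let ν : ℝ → ℝ := fun x => c * x ^ (s - 1)
    let Eb : ℝ := Real.sqrt 2 * ubar / η
    let νb : ℝ := ν Eb
    let νb' : ℝ := deriv ν Eb
    let νb'' : ℝ := deriv (deriv ν) Eb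
    let R : ℝ := 1 / (νb + Eb * νb')
    ∀ a b Re g₁ g₂ : ℝ,
      -(5 / 2 + (5 / 48) * Eb * νb * R ^ 2 * (2 * νb' + Eb * νb'')) * (νb * ubar / η ^ 2)
        - Re * (7 / 4 - 13 / 48
            + (1 / 96) * Eb * R ^ 2
                * (38 * νb * νb' + 12 * Eb * νb' ^ 2 + 13 * Eb * νb * νb'')) * (ubar * a)
        - Re * Real.sqrt 2 * (1 / 8 - 1 / 16
            + (13 / 192) * Eb ^ 2 * R ^ 2 * (2 * νb' ^ 2 - νb * νb'')) * (Eb * ubar * b)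
        + (3 / 4 + 1 / 12 - (1 / 24) * Eb * νb * R ^ 2 * (2 * νb' + Eb * νb''))
            * (g₁ - g₂ * b)
      =
      -(5 * (25 - 1 / s) * c / (48 * Real.sqrt 2 * η))
            * (Real.sqrt 2 * ubar / η) ^ s
        - Re * ((167 - 25 / s) / 96) * (ubar * a)
        - Re * ((25 - 13 / s) / 96) * (ubar ^ 2 / η) * b
        + ((19 + 1 / s) / 24) * (g₁ - g₂ * b) := by
  intro ν Eb νb νb' νb'' R a b Re g₁ g₂
  have hE : 0 < Eb := by positivity
  have hN : νb ≠ 0 := mul_ne_zero hc (Real.rpow_pos_of_pos hE _).ne'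
  have h1 : νb' = (s - 1) * νb / Eb := deriv_viscosity c s hE
  have h2 : νb'' = (s - 1) * (s - 2) * νb / Eb ^ 2 := deriv_deriv_viscosity c s hE
  have hR : R = 1 / (s * νb) := by
    have : νb + Eb * νb' = s * νb := by
      rw [h1]
      field_simp
      ring
    change 1 / (νb + Eb * νb') = _
    rw [this]
  have hpow : c * (Real.sqrt 2 * ubar / η) ^ s = νb * Eb := by
    change c * Eb ^ s = c * Eb ^ (s - 1) * Eb
    rw [Real.rpow_sub_one hE.ne']
    field_simp
  have hq : Real.sqrt 2 * Real.sqrt 2 = 2 := Real.mul_self_sqrt (by norm_num)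
  have hq0 : Real.sqrt 2 ≠ 0 := by positivity
  have hEu : Eb = Real.sqrt 2 * ubar / η := rfl
  -- The four terms are compared one at a time, with the bracket of each evaluated first.
  have b1 : Eb * νb * R ^ 2 * (2 * νb' + Eb * νb'') = 1 - 1 / s := by
    rw [hR, h1, h2]
    field_simp
    ring
  have b2 : Eb * R ^ 2 * (38 * νb * νb' + 12 * Eb * νb' ^ 2 + 13 * Eb * νb * νb'')
      = 25 * (1 - 1 / s) := by
    rw [hR, h1, h2]
    field_simp
    ring
  have b3 : Eb ^ 2 * R ^ 2 * (2 * νb' ^ 2 - νb * νb'') = 1 - 1 / s := by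
    rw [hR, h1, h2]
    field_simp
    ring
  have drag : 5 * (25 - 1 / s) * c / (48 * Real.sqrt 2 * η) * (Real.sqrt 2 * ubar / η) ^ s
      = 5 / 48 * (25 - 1 / s) * (νb * ubar / η ^ 2) := by
    calc _ = 5 * (25 - 1 / s) / (48 * Real.sqrt 2 * η)
          * (c * (Real.sqrt 2 * ubar / η) ^ s) := by ring
      _ = 5 * (25 - 1 / s) / (48 * Real.sqrt 2 * η) * (νb * (Real.sqrt 2 * ubar / η)) := by
        rw [hpow, hEu]
      _ = _ := by
        field_simp
  have depth : Real.sqrt 2 * Eb * ubar = 2 * (ubar ^ 2 / η) := by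
    rw [hEu]
    linear_combination (ubar ^ 2 / η) * hq
  linear_combination (-(5 / 48) * (νb * ubar / η ^ 2) - 1 / 24 * (g₁ - g₂ * b)) * b1
    - Re / 96 * (ubar * a) * b2 - Re * Real.sqrt 2 * (13 / 192) * (Eb * ubar * b) * b3
    - Re * b * ((25 - 13 / s) / 192) * depth + drag
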